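/- arXiv:2107.00251 — 9 statements merged into one kernel-verified Lean document; each statement's English description precedes it below -/
import Mathlib

section
/- For every isotonic function g : V → ℝ, the weighted L0 error of g is at least ∑_{v ∈ V} w(v) minus the maximum of ∑_{v ∈ C} w(v) over all antichains C of the violator relation ≺ᵥ. -/
/-- The violator relation: `u ≺ᵥ v` iff `u < v` in the partial order and `f u > f v`. -/
def Viol {V : Type*} [PartialOrder V] (f : V → ℝ) (u v : V) : Prop :=
  u < v ∧ f v < f u

/-- The weighted L0 error of any isotonic function is at least the total weight minus
the maximum weight of an antichain of the violator relation. -/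
theorem L0_error_ge_total_sub_max_antichain {V : Type*} [PartialOrder V] [Fintype V]
    (f w : V → ℝ) (hw : ∀ v, 0 ≤ w v)
    (g : V → ℝ) (hg : ∀ u v : V, u ≤ v → g u ≤ g v) :
    ∑ v, w v * (if g v = f v then 0 else 1) ≥
      (∑ v, w v) -
        sSup {x : ℝ | ∃ C : Finset V,
          (∀ u ∈ C, ∀ v ∈ C, ¬ Viol f u v) ∧ x = ∑ v ∈ C, w v} := by
  have hle : ∑ v ∈ Finset.univ.filter (fun v => g v = f v), w v ≤
      sSup {x : ℝ | ∃ C : Finset V,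
          (∀ u ∈ C, ∀ v ∈ C, ¬ Viol f u v) ∧ x = ∑ v ∈ C, w v} := by
    apply le_csSup
    · refine ⟨∑ v, w v, ?_⟩
      rintro x ⟨C, -, rfl⟩
      exact Finset.sum_le_sum_of_subset_of_nonneg (Finset.subset_univ C) (fun v _ _ => hw v)
    · refine ⟨_, ?_, rfl⟩
      rintro u hu v hv ⟨h1, h2⟩
      simp only [Finset.mem_filter, Finset.mem_univ, true_and] at hu hv
      have := hg u v h1.le
      linarith
  have heq : ∑ v, w v * (if g v = f v then 0 else 1) +
      ∑ v ∈ Finset.univ.filter (fun v => g v = f v), w v = ∑ v, w v := by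
    rw [Finset.sum_filter, ← Finset.sum_add_distrib]
    apply Finset.sum_congr rfl
    intro v _
    split_ifs <;> simp
  linarith
end

section
/- The minimum weighted L0 error over all isotonic functions g : V → ℝ is attained and equals ∑_{v ∈ V} w(v) − max{∑_{v ∈ C} w(v) : C an antichain of ≺ᵥ}. In particular, an isotonic regression constructed from a maximum-weight antichain of the violator relation is L0-optimal. -/
/-- The minimum weighted L0 error over all isotonic functions is attained and equals the
total weight minus the maximum weight of an antichain of the violator relation. -/
theorem L0_min_eq_total_sub_max_antichain {V : Type*} [PartialOrder V] [Fintype V]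
    [Nonempty V] (f w : V → ℝ) (hw : ∀ v, 0 ≤ w v) :
    ∃ g : V → ℝ, Monotone g ∧
      (∀ h : V → ℝ, Monotone h →
        ∑ v, w v * (if g v = f v then 0 else 1) ≤
          ∑ v, w v * (if h v = f v then 0 else 1)) ∧
      ∑ v, w v * (if g v = f v then 0 else 1) =
        (∑ v, w v) -
          sSup {x : ℝ | ∃ C : Finset V,
            (∀ u ∈ C, ∀ v ∈ C, ¬ Viol f u v) ∧ x = ∑ v ∈ C, w v} := by
  classical
  have err : ∀ h : V → ℝ, ∑ v, w v * (if h v = f v then (0 : ℝ) else 1) =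
      (∑ v, w v) - ∑ v ∈ Finset.univ.filter (fun v => h v = f v), w v := by
    intro h
    rw [Finset.sum_filter, ← Finset.sum_sub_distrib]
    refine Finset.sum_congr rfl fun v _ => ?_
    split_ifs <;> simp
  have anti : ∀ h : V → ℝ, Monotone h →
      ∀ u ∈ Finset.univ.filter (fun v => h v = f v),
      ∀ v ∈ Finset.univ.filter (fun v => h v = f v), ¬ Viol f u v := by
    intro h hh u hu v hv huv
    rw [Finset.mem_filter] at hu hv
    have h1 := hh huv.1.le
    have h2 := huv.2
    rw [hu.2, hv.2] at h1
    linarith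
  obtain ⟨C, hC, hmax⟩ := Finset.exists_max_image
    (Finset.univ.filter (fun C : Finset V => ∀ u ∈ C, ∀ v ∈ C, ¬ Viol f u v))
    (fun C => ∑ v ∈ C, w v) ⟨∅, by simp⟩
  simp only [Finset.mem_filter, Finset.mem_univ, true_and] at hC hmax
  have hS : sSup {x : ℝ | ∃ C : Finset V,
      (∀ u ∈ C, ∀ v ∈ C, ¬ Viol f u v) ∧ x = ∑ v ∈ C, w v} = ∑ v ∈ C, w v := by
    apply IsGreatest.csSup_eq
    refine ⟨⟨C, hC, rfl⟩, ?_⟩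
    rintro x ⟨D, hD, rfl⟩
    exact hmax D hD
  obtain ⟨a, ha⟩ := Finite.exists_min f
  let T : V → Finset ℝ := fun v => insert (f a) ((C.filter (fun u => u ≤ v)).image f)
  have hT : ∀ v, (T v).Nonempty := fun v => Finset.insert_nonempty _ _
  let g : V → ℝ := fun v => (T v).max' (hT v)
  have hg : Monotone g := by
    intro u v huv
    apply Finset.max'_subset
    apply Finset.insert_subset_insert
    apply Finset.image_subset_image
    intro x hx
    rw [Finset.mem_filter] at hx ⊢
    exact ⟨hx.1, hx.2.trans huv⟩
  have hgC : ∀ v ∈ C, g v = f v := by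
    intro v hv
    apply le_antisymm
    · apply Finset.max'_le
      intro y hy
      rcases Finset.mem_insert.1 hy with rfl | hy
      · exact ha v
      · obtain ⟨u, hu, rfl⟩ := Finset.mem_image.1 hy
        rw [Finset.mem_filter] at hu
        rcases hu.2.eq_or_lt with h | h
        · rw [h]
        · by_contra hlt
          exact hC u hu.1 v hv ⟨h, not_le.1 hlt⟩
    · apply Finset.le_max'
      exact Finset.mem_insert_of_mem
        (Finset.mem_image_of_mem f (Finset.mem_filter.2 ⟨hv, le_rfl⟩))
  have hgS : ∑ v ∈ Finset.univ.filter (fun v => g v = f v), w v = ∑ v ∈ C, w v := by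
    apply le_antisymm (hmax _ (anti g hg))
    apply Finset.sum_le_sum_of_subset_of_nonneg
    · intro v hv
      exact Finset.mem_filter.2 ⟨Finset.mem_univ _, hgC v hv⟩
    · intro v _ _
      exact hw v
  refine ⟨g, hg, ?_, ?_⟩
  · intro h hh
    have := hmax _ (anti h hh)
    have e1 := err g
    have e2 := err h
    rw [hgS] at e1
    linarith
  · have e1 := err g
    rw [hgS] at e1
    rw [hS]
    exact e1
end

section
/- Suppose w(v) > 0 for all v ∈ V. Then there exists an isotonic g : V → ℝ that minimizes the weighted L0 error and satisfies g(v) = f(v) for every v that is contained in no violating pair (i.e., every v such that there is no u with u ≺ᵥ v or v ≺ᵥ u). Equivalently, every maximum-weight antichain of ≺ᵥ contains all vertices that are in no violating pair. -/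
/-- When all weights are positive, some L0-optimal isotonic regression leaves unchanged
every vertex contained in no violating pair; equivalently, every maximum-weight antichain
of the violator relation contains all vertices in no violating pair. -/
theorem L0_optimal_fixes_nonviolators {V : Type*} [PartialOrder V] [Fintype V]
    [Nonempty V] (f w : V → ℝ) (hw : ∀ v, 0 < w v) :
    (∃ g : V → ℝ, Monotone g ∧
      (∀ h : V → ℝ, Monotone h →
        ∑ v, w v * (if g v = f v then 0 else 1) ≤
          ∑ v, w v * (if h v = f v then 0 else 1)) ∧
      (∀ v : V, (∀ u : V, ¬ Viol f u v ∧ ¬ Viol f v u) → g v = f v)) ∧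
    (∀ C : Finset V, (∀ u ∈ C, ∀ v ∈ C, ¬ Viol f u v) →
      (∀ D : Finset V, (∀ u ∈ D, ∀ v ∈ D, ¬ Viol f u v) → ∑ v ∈ D, w v ≤ ∑ v ∈ C, w v) →
      ∀ v : V, (∀ u : V, ¬ Viol f u v ∧ ¬ Viol f v u) → v ∈ C) := by
  classical
  have key : ∀ C : Finset V, (∀ u ∈ C, ∀ v ∈ C, ¬ Viol f u v) →
      (∀ D : Finset V, (∀ u ∈ D, ∀ v ∈ D, ¬ Viol f u v) → ∑ v ∈ D, w v ≤ ∑ v ∈ C, w v) →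
      ∀ v : V, (∀ u : V, ¬ Viol f u v ∧ ¬ Viol f v u) → v ∈ C := by
    intro C hC hmax v hv
    by_contra hvC
    have h1 := hmax (insert v C) (by
      intro a ha b hb
      rcases Finset.mem_insert.1 ha with rfl | ha
      · exact (hv b).2
      · rcases Finset.mem_insert.1 hb with rfl | hb
        · exact (hv a).1
        · exact hC a ha b hb)
    rw [Finset.sum_insert hvC] at h1
    linarith [hw v]
  refine ⟨?_, key⟩
  obtain ⟨C, hCm, hCmax⟩ := Finset.exists_max_image
    ((Finset.univ : Finset (Finset V)).filter (fun C => ∀ u ∈ C, ∀ v ∈ C, ¬ Viol f u v))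
    (fun C => ∑ v ∈ C, w v) ⟨∅, by simp⟩
  have hC : ∀ u ∈ C, ∀ v ∈ C, ¬ Viol f u v := (Finset.mem_filter.1 hCm).2
  have hmax : ∀ D : Finset V, (∀ u ∈ D, ∀ v ∈ D, ¬ Viol f u v) →
      ∑ v ∈ D, w v ≤ ∑ v ∈ C, w v :=
    fun D hD => hCmax D (Finset.mem_filter.2 ⟨Finset.mem_univ _, hD⟩)
  obtain ⟨m, hm⟩ : ∃ m : ℝ, ∀ v, m ≤ f v := by
    obtain ⟨x, hx⟩ := Finite.exists_min f
    exact ⟨f x, hx⟩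
  let g : V → ℝ := fun x => Finset.univ.sup' Finset.univ_nonempty
    (fun u => if u ∈ C ∧ u ≤ x then f u else m)
  have hg : Monotone g := by
    intro x y hxy
    apply Finset.sup'_le
    intro u _
    refine le_trans ?_ (Finset.le_sup' (fun u => if u ∈ C ∧ u ≤ y then f u else m)
      (Finset.mem_univ u))
    by_cases h : u ∈ C ∧ u ≤ x
    · simp only [if_pos h, if_pos (show u ∈ C ∧ u ≤ y from ⟨h.1, h.2.trans hxy⟩), le_refl]
    · simp only [if_neg h]
      split_ifs
      · exact hm u
      · exact le_rfl
  have hgC : ∀ x ∈ C, g x = f x := by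
    intro x hx
    apply le_antisymm
    · apply Finset.sup'_le
      intro u _
      split_ifs with h
      · by_contra hlt
        rw [not_le] at hlt
        refine hC u h.1 x hx ⟨lt_of_le_of_ne h.2 ?_, hlt⟩
        rintro rfl
        exact lt_irrefl _ hlt
      · exact hm x
    · refine le_trans ?_ (Finset.le_sup' (fun u => if u ∈ C ∧ u ≤ x then f u else m)
        (Finset.mem_univ x))
      simp [hx]
  have herr : ∀ h : V → ℝ, ∑ v, w v * (if h v = f v then (0:ℝ) else 1) =
      ∑ v, w v - ∑ v ∈ Finset.univ.filter (fun v => h v = f v), w v := by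
    intro h
    rw [Finset.sum_filter, ← Finset.sum_sub_distrib]
    refine Finset.sum_congr rfl fun v _ => ?_
    split_ifs <;> simp
  refine ⟨g, hg, ?_, fun v hv => hgC v (key C hC hmax v hv)⟩
  intro h hh
  have h1 := hmax (Finset.univ.filter (fun v => h v = f v)) (by
    intro a ha b hb hab
    have ha' := (Finset.mem_filter.1 ha).2
    have hb' := (Finset.mem_filter.1 hb).2
    have h2 := hh hab.1.le
    rw [ha', hb'] at h2
    exact absurd hab.2 (not_lt.2 h2))
  have h2 : ∑ v ∈ C, w v ≤ ∑ v ∈ Finset.univ.filter (fun v => g v = f v), w v :=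
    Finset.sum_le_sum_of_subset_of_nonneg
      (fun x hx => Finset.mem_filter.2 ⟨Finset.mem_univ _, hgC x hx⟩) (fun v _ _ => (hw v).le)
  have e1 := herr g
  have e2 := herr h
  have : ∑ v, w v * (if g v = f v then (0:ℝ) else 1) ≤
      ∑ v, w v * (if h v = f v then (0:ℝ) else 1) := by
    rw [e1, e2]; linarith
  convert this
end

section
/- There exists an isotonic function g : V → ℝ that minimizes the weighted L1 error over all isotonic functions and additionally satisfies g(v) ∈ f(V) for every v ∈ V; that is, there is always an L1-optimal isotonic regression whose regression values are values of the original function. -/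
open Classical in
theorem L1_aux {V : Type*} [PartialOrder V] [Fintype V]
    (f w : V → ℝ) (hw : ∀ v, 0 ≤ w v) (n : ℕ) :
    ∀ h : V → ℝ, Monotone h → (∀ v, ∃ u, f u ≤ h v) → (∀ v, ∃ u, h v ≤ f u) →
      ((Finset.univ.image h) \ (Finset.univ.image f)).card = n →
      ∃ g : V → ℝ, Monotone g ∧ (∀ v : V, g v ∈ Set.range f) ∧
        ∑ v, w v * |g v - f v| ≤ ∑ v, w v * |h v - f v| := by
  induction n using Nat.strong_induction_on with
  | _ n ih =>
  intro h hm hlo hhi hcard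
  by_cases hall : ∀ v, h v ∈ Set.range f
  · exact ⟨h, hm, hall, le_rfl⟩
  push Not at hall
  obtain ⟨v0, hv0⟩ := hall
  obtain ⟨c, hc⟩ : ∃ c, c = h v0 := ⟨_, rfl⟩
  rw [← hc] at hv0
  have hcf : ∀ u, f u ≠ c := fun u hu => hv0 ⟨u, hu⟩
  let R : Finset ℝ := Finset.univ.image h ∪ Finset.univ.image f
  have hhR : ∀ v, h v ∈ R := fun v => by simp [R]
  have hfR : ∀ v, f v ∈ R := fun v => by simp [R]
  obtain ⟨u1, hu1⟩ := hlo v0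
  obtain ⟨u2, hu2⟩ := hhi v0
  rw [← hc] at hu1 hu2
  obtain ⟨a, ha, hamax⟩ := (R.filter (· < c)).exists_max_image id
    ⟨f u1, Finset.mem_filter.2 ⟨hfR _, lt_of_le_of_ne hu1 (hcf _)⟩⟩
  obtain ⟨b, hb, hbmin⟩ := (R.filter (c < ·)).exists_min_image id
    ⟨f u2, Finset.mem_filter.2 ⟨hfR _, lt_of_le_of_ne hu2 (hcf _).symm⟩⟩
  simp only [Finset.mem_filter, id, and_imp] at ha hb hamax hbmin
  have key : ∀ d ∈ R, d ≠ c → a ≤ d → d ≤ b →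
      ∑ v, w v * |(if h v = c then d else h v) - f v| ≤ ∑ v, w v * |h v - f v| →
      ∃ g : V → ℝ, Monotone g ∧ (∀ v : V, g v ∈ Set.range f) ∧
        ∑ v, w v * |g v - f v| ≤ ∑ v, w v * |h v - f v| := by
    intro d hd hdc had hdb hle
    have hdR : (∃ v, h v = d) ∨ (∃ v, f v = d) := by simpa [R] using hd
    obtain ⟨g, hg1, hg2, hg3⟩ := ih _ (by
      rw [← hcard]
      apply Finset.card_lt_card
      rw [Finset.ssubset_iff_of_subset]
      · refine ⟨c, ?_, ?_⟩
        · simp only [Finset.mem_sdiff, Finset.mem_image, Finset.mem_univ, true_and]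
          exact ⟨⟨v0, hc.symm⟩, fun ⟨u, hu⟩ => hcf u hu⟩
        · simp only [Finset.mem_sdiff, Finset.mem_image, Finset.mem_univ, true_and]
          rintro ⟨⟨v, hv⟩, -⟩
          split_ifs at hv with h1
          · exact hdc hv
          · exact h1 hv
      · intro x
        simp only [Finset.mem_sdiff, Finset.mem_image, Finset.mem_univ, true_and]
        rintro ⟨⟨v, hv⟩, hx⟩
        refine ⟨?_, hx⟩
        split_ifs at hv with h1
        · subst hv
          exact hdR.resolve_right hx
        · exact ⟨v, hv⟩) (fun v => if h v = c then d else h v) (by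
        intro x y hxy
        have h1 := hm hxy
        have h2 := hamax _ (hhR x)
        have h3 := hbmin _ (hhR y)
        dsimp only
        split_ifs with h4 h5 h5
        · exact le_rfl
        · exact hdb.trans (h3 (lt_of_le_of_ne (h4 ▸ h1) (Ne.symm h5)))
        · exact (h2 (lt_of_le_of_ne (h5 ▸ h1) h4)).trans had
        · exact h1) (by
        intro v
        split_ifs
        · rcases hdR with ⟨u, rfl⟩ | ⟨u, rfl⟩
          · exact hlo u
          · exact ⟨u, le_rfl⟩
        · exact hlo v) (by
        intro v
        split_ifs
        · rcases hdR with ⟨u, rfl⟩ | ⟨u, rfl⟩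
          · exact hhi u
          · exact ⟨u, le_rfl⟩
        · exact hhi v) rfl
    exact ⟨g, hg1, hg2, hg3.trans hle⟩
  have hlin : (b - a) * ∑ v, w v * |h v - f v| =
      (b - c) * ∑ v, w v * |(if h v = c then a else h v) - f v| +
      (c - a) * ∑ v, w v * |(if h v = c then b else h v) - f v| := by
    simp only [Finset.mul_sum, ← Finset.sum_add_distrib]
    refine Finset.sum_congr rfl fun v _ => ?_
    split_ifs with h1
    · rw [h1]
      rcases lt_or_gt_of_ne (hcf v) with h2 | h2
      · have h3 := hamax _ (hfR v) h2
        rw [abs_of_nonneg (by linarith), abs_of_nonneg (by linarith),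
          abs_of_nonneg (by linarith [hb.2])]
        ring
      · have h3 := hbmin _ (hfR v) h2
        rw [abs_of_nonpos (by linarith), abs_of_nonpos (by linarith [ha.2]),
          abs_of_nonpos (by linarith)]
        ring
    · ring
  have hab : a ≤ b := (ha.2.trans hb.2).le
  by_cases hA : ∑ v, w v * |(if h v = c then a else h v) - f v| ≤ ∑ v, w v * |h v - f v|
  · exact key a ha.1 ha.2.ne le_rfl hab hA
  · refine key b hb.1 hb.2.ne' hab le_rfl ?_
    by_contra hB
    push Not at hA hB
    have e1 := mul_lt_mul_of_pos_left hA (sub_pos.2 hb.2)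
    have e2 := mul_lt_mul_of_pos_left hB (sub_pos.2 ha.2)
    linarith

/-- There is always an L1-optimal isotonic regression whose regression values are
values of the original function. -/
theorem L1_optimal_with_values_in_range {V : Type*} [PartialOrder V] [Fintype V]
    [Nonempty V] (f w : V → ℝ) (hw : ∀ v, 0 ≤ w v) :
    ∃ g : V → ℝ, Monotone g ∧ (∀ v : V, g v ∈ Set.range f) ∧
      ∀ h : V → ℝ, Monotone h →
        ∑ v, w v * |g v - f v| ≤ ∑ v, w v * |h v - f v| := by
  have hfin : {g : V → ℝ | Monotone g ∧ ∀ v, g v ∈ Set.range f}.Finite :=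
    (Set.Finite.pi' (fun _ : V => Set.finite_range f)).subset fun g hg => hg.2
  obtain ⟨v0⟩ := ‹Nonempty V›
  obtain ⟨g, hg, hmin⟩ := Set.exists_min_image _ (fun g => ∑ v, w v * |g v - f v|) hfin
    ⟨fun _ => f v0, monotone_const, fun _ => ⟨v0, rfl⟩⟩
  refine ⟨g, hg.1, hg.2, fun h hm => ?_⟩
  obtain ⟨l, -, hl⟩ := Finset.univ.exists_min_image f ⟨v0, Finset.mem_univ _⟩
  obtain ⟨u, -, hu⟩ := Finset.univ.exists_max_image f ⟨v0, Finset.mem_univ _⟩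
  have hlu := hl u (Finset.mem_univ _)
  obtain ⟨g', h1, h2, h3⟩ := L1_aux f w hw _ (fun v => max (f l) (min (f u) (h v)))
    (fun x y hxy => max_le_max le_rfl (min_le_min le_rfl (hm hxy)))
    (fun v => ⟨l, le_max_left _ _⟩)
    (fun v => ⟨u, max_le hlu (min_le_left _ _)⟩) rfl
  refine (hmin g' ⟨h1, h2⟩).trans (h3.trans ?_)
  refine Finset.sum_le_sum fun v _ => mul_le_mul_of_nonneg_left ?_ (hw v)
  have a1 := hl v (Finset.mem_univ _)
  have a2 := hu v (Finset.mem_univ _)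
  rcases le_total (f u) (h v) with b1 | b1
  · rw [min_eq_left b1, max_eq_right hlu, abs_of_nonneg (by linarith), abs_of_nonneg (by linarith)]
    linarith
  · rw [min_eq_right b1]
    rcases le_total (f l) (h v) with b2 | b2
    · rw [max_eq_right b2]
    · rw [max_eq_left b2, abs_of_nonpos (by linarith), abs_of_nonpos (by linarith)]
      linarith
end

section
/- Suppose f takes values only in {0,1}. Then the minimum weighted L0 error over all isotonic g : V → ℝ equals the minimum weighted L1 error over all isotonic g : V → ℝ, and both minima are attained by an isotonic function taking values only in {0,1}. (L0 isotonic regression with two labels coincides with L1 isotonic regression of {0,1}-valued data.) -/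
theorem aux_intInt (c : ℝ) :
    IntervalIntegrable (fun t : ℝ => if t ≤ c then (1:ℝ) else 0) MeasureTheory.volume 0 1 := by
  apply Antitone.intervalIntegrable
  intro a b hab
  dsimp only
  split_ifs <;> first | linarith | norm_num

theorem aux_int (c : ℝ) (h0 : 0 ≤ c) (h1 : c ≤ 1) :
    ∫ t in (0:ℝ)..1, (if t ≤ c then (1:ℝ) else 0) = c := by
  have : (fun t : ℝ => if t ≤ c then (1:ℝ) else 0) = (Set.Iic c).indicator (fun _ => (1:ℝ)) := by
    funext t
    simp [Set.indicator_apply]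
  rw [this, intervalIntegral.integral_of_le zero_le_one,
    MeasureTheory.setIntegral_indicator measurableSet_Iic, Set.Ioc_inter_Iic, min_eq_right h1]
  simp [h0]

theorem aux_abs (a b : ℝ) (h0 : 0 ≤ a) (h1 : a ≤ 1) (hb : b = 0 ∨ b = 1) :
    |a - b| = b + (1 - 2 * b) * a := by
  rcases hb with rfl | rfl
  · simp [abs_of_nonneg h0]
  · rw [abs_of_nonpos (by linarith)]; ring

/-- For `{0,1}`-valued data, L0 isotonic regression coincides with L1 isotonic
regression: the two minima are equal and both are attained by an isotonic
`{0,1}`-valued function. -/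
theorem L0_eq_L1_for_binary_data {V : Type*} [PartialOrder V] [Fintype V]
    [Nonempty V] (f w : V → ℝ) (hf : ∀ v, f v = 0 ∨ f v = 1) (hw : ∀ v, 0 ≤ w v) :
    ∃ g : V → ℝ, Monotone g ∧ (∀ v, g v = 0 ∨ g v = 1) ∧
      (∀ h : V → ℝ, Monotone h →
        ∑ v, w v * (if g v = f v then 0 else 1) ≤
          ∑ v, w v * (if h v = f v then 0 else 1)) ∧
      (∀ h : V → ℝ, Monotone h →
        ∑ v, w v * |g v - f v| ≤ ∑ v, w v * |h v - f v|) ∧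
      ∑ v, w v * (if g v = f v then 0 else 1) = ∑ v, w v * |g v - f v| := by
  have key : ∀ g : V → ℝ, (∀ v, g v = 0 ∨ g v = 1) →
      ∑ v, w v * (if g v = f v then 0 else 1) = ∑ v, w v * |g v - f v| := by
    intro g hg
    refine Finset.sum_congr rfl fun v _ => ?_
    rcases hg v with h | h <;> rcases hf v with h' | h' <;> simp [h, h']
  have hfin : {g : V → ℝ | Monotone g ∧ ∀ v, g v = 0 ∨ g v = 1}.Finite := by
    refine (Set.Finite.pi (t := fun _ : V => ({0, 1} : Set ℝ)) fun _ => by simp).subset ?_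
    rintro g ⟨-, hg⟩ v -
    simpa using hg v
  obtain ⟨g, ⟨hgm, hgb⟩, hmin⟩ := Set.exists_min_image _
    (fun g : V → ℝ => ∑ v, w v * |g v - f v|) hfin ⟨fun _ => 0, monotone_const, by simp⟩
  have hthr : ∀ (h : V → ℝ), Monotone h → ∀ t : ℝ,
      ∑ v, w v * |g v - f v| ≤ ∑ v, w v * |(if t ≤ h v then (1:ℝ) else 0) - f v| := by
    intro h hh t
    refine hmin (fun v => if t ≤ h v then (1:ℝ) else 0) ⟨?_, ?_⟩
    · intro a b hab
      have := hh hab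
      dsimp only
      split_ifs <;> first | linarith | norm_num
    · intro v
      dsimp only
      split_ifs <;> simp
  refine ⟨g, hgm, hgb, ?_, ?_, key g hgb⟩
  · intro h hh
    rw [key g hgb]
    refine (hthr h hh 1).trans (Finset.sum_le_sum fun v _ => mul_le_mul_of_nonneg_left ?_ (hw v))
    rcases hf v with h' | h' <;> rw [h'] <;> split_ifs <;> norm_num <;> linarith
  · intro h hh
    set c : V → ℝ := fun v => max 0 (min 1 (h v)) with hc
    have hcm : Monotone c := fun a b hab => max_le_max le_rfl (min_le_min le_rfl (hh hab))
    have c0 : ∀ v, 0 ≤ c v := fun v => le_max_left _ _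
    have c1 : ∀ v, c v ≤ 1 := fun v => max_le zero_le_one (min_le_left _ _)
    have e1 : ∑ v, w v * |c v - f v| ≤ ∑ v, w v * |h v - f v| := by
      refine Finset.sum_le_sum fun v _ => mul_le_mul_of_nonneg_left ?_ (hw v)
      have : f v = max 0 (min 1 (f v)) := by rcases hf v with h' | h' <;> simp [h']
      rw [aux_abs _ _ (c0 v) (c1 v) (hf v)]
      simp only [hc]
      rcases hf v with h' | h' <;> rw [h'] <;>
        rcases max_cases 0 (min 1 (h v)) with ⟨a, b⟩ | ⟨a, b⟩ <;>
        rcases min_cases 1 (h v) with ⟨a', b'⟩ | ⟨a', b'⟩ <;>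
        rw [a] <;> simp only [a'] at * <;>
        first
          | linarith [le_abs_self (h v - 0), neg_abs_le (h v - 0), abs_nonneg (h v - 0)]
          | linarith [le_abs_self (h v - 1), neg_abs_le (h v - 1), abs_nonneg (h v - 1)]
    refine le_trans ?_ e1
    have hI : ∀ v ∈ Finset.univ, IntervalIntegrable (fun t : ℝ =>
        w v * (f v + (1 - 2 * f v) * (if t ≤ c v then (1:ℝ) else 0))) MeasureTheory.volume 0 1 :=
      fun v _ => (intervalIntegrable_const.add ((aux_intInt (c v)).const_mul _)).const_mul _
    have e2 : ∑ v, w v * |c v - f v| = ∫ t in (0:ℝ)..1,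
        ∑ v, w v * (f v + (1 - 2 * f v) * (if t ≤ c v then (1:ℝ) else 0)) := by
      rw [intervalIntegral.integral_finsetSum hI]
      refine Finset.sum_congr rfl fun v _ => ?_
      rw [intervalIntegral.integral_const_mul, intervalIntegral.integral_add
        intervalIntegrable_const ((aux_intInt (c v)).const_mul _),
        intervalIntegral.integral_const_mul, aux_int _ (c0 v) (c1 v),
        aux_abs _ _ (c0 v) (c1 v) (hf v)]
      simp
    rw [e2]
    have e3 : ∑ v, w v * |g v - f v| = ∫ t in (0:ℝ)..1, ∑ v, w v * |g v - f v| := by simp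
    rw [e3]
    refine intervalIntegral.integral_mono_on zero_le_one intervalIntegrable_const ?_ ?_
    · have := IntervalIntegrable.sum _ hI
      rw [show (∑ v, fun t : ℝ => w v * (f v + (1 - 2 * f v) * (if t ≤ c v then (1:ℝ) else 0))) =
        fun t : ℝ => ∑ v, w v * (f v + (1 - 2 * f v) * (if t ≤ c v then (1:ℝ) else 0)) from by
          funext t
          rw [Finset.sum_apply]] at this
      exact this
    · intro t _
      refine (hthr c hcm t).trans (le_of_eq (Finset.sum_congr rfl fun v _ => ?_))
      rw [aux_abs _ _ _ _ (hf v)] <;> split_ifs <;> norm_num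
end

section
/- Let a < b be reals with f(V) ∩ (a,b) = ∅, and define g : V → {a,b} by g(v) = a if f(v) ≤ a and g(v) = b if f(v) ≥ b. For every function h : V → {a,b}, the weighted L1 error of h relative to f decomposes as ∑_{v} w(v)·|h(v) − f(v)| = ∑_{v} w(v)·|g(v) − f(v)| + (b − a)·∑_{v} w(v)·[h(v) ≠ g(v)]. Consequently, an isotonic {a,b}-valued h minimizes the weighted L1 distance to f among isotonic {a,b}-valued functions if and only if it minimizes the weighted Hamming (L0) distance to g among isotonic {a,b}-valued functions. -/
/-- Suppose no value of `f` lies in the open interval `(a,b)`, and let `g` round `f`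
to `{a,b}`.  For any `{a,b}`-valued `h`, the weighted L1 error of `h` relative to `f`
decomposes as the L1 error of `g` plus `(b-a)` times the weighted Hamming distance from
`h` to `g`.  Consequently an isotonic `{a,b}`-valued `h` minimizes the weighted L1
distance to `f` among isotonic `{a,b}`-valued functions iff it minimizes the weighted
Hamming distance to `g` among those functions. -/
theorem L1_decomposition_binary {V : Type*} [PartialOrder V] [Fintype V]
    (f w : V → ℝ) (hw : ∀ v, 0 ≤ w v) (a b : ℝ) (hab : a < b)
    (hgap : ∀ v : V, f v ≤ a ∨ b ≤ f v)
    (g : V → ℝ) (hg : ∀ v : V, g v = if f v ≤ a then a else b) :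
    (∀ h : V → ℝ, (∀ v, h v = a ∨ h v = b) →
      ∑ v, w v * |h v - f v| =
        (∑ v, w v * |g v - f v|) +
          (b - a) * ∑ v, w v * (if h v = g v then 0 else 1)) ∧
    (∀ h : V → ℝ, Monotone h → (∀ v, h v = a ∨ h v = b) →
      ((∀ h' : V → ℝ, Monotone h' → (∀ v, h' v = a ∨ h' v = b) →
          ∑ v, w v * |h v - f v| ≤ ∑ v, w v * |h' v - f v|) ↔
       (∀ h' : V → ℝ, Monotone h' → (∀ v, h' v = a ∨ h' v = b) →
          ∑ v, w v * (if h v = g v then 0 else 1) ≤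
            ∑ v, w v * (if h' v = g v then 0 else 1)))) := by
  have key : ∀ h : V → ℝ, (∀ v, h v = a ∨ h v = b) →
      ∑ v, w v * |h v - f v| =
        (∑ v, w v * |g v - f v|) +
          (b - a) * ∑ v, w v * (if h v = g v then 0 else 1) := by
    intro h hh
    rw [Finset.mul_sum, ← Finset.sum_add_distrib]
    refine Finset.sum_congr rfl fun v _ => ?_
    have hba : b ≠ a := hab.ne'
    rw [hg v]
    by_cases hf : f v ≤ a
    · rw [if_pos hf]
      rcases hh v with e | e
      · simp [e]
      · rw [e, if_neg hba, abs_of_nonneg (by linarith), abs_of_nonneg (by linarith)]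
        ring
    · rw [if_neg hf]
      have hf' : b ≤ f v := (hgap v).resolve_left hf
      rcases hh v with e | e
      · rw [e, if_neg hab.ne, abs_of_nonpos (by linarith), abs_of_nonpos (by linarith)]
        ring
      · simp [e]
  refine ⟨key, fun h _ hh => ?_⟩
  refine forall_congr' fun h' => forall_congr' fun _ => forall_congr' fun hh' => ?_
  rw [key h hh, key h' hh', add_le_add_iff_left, mul_le_mul_iff_right₀ (sub_pos.2 hab)]
end

section
/- Let g : V → ℝ be the unique isotonic function minimizing the weighted L2 error ∑_{v} w(v)·(g(v) − f(v))². Then for every value c in the range of g, the value c equals the weighted mean of f over the level set L = {v ∈ V : g(v) = c}; that is, c = (∑_{v ∈ L} w(v) f(v)) / (∑_{v ∈ L} w(v)). -/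
open scoped Classical

/-- Each regression value of the L2 isotonic regression equals the weighted mean of `f`
over the corresponding level set. -/
theorem L2_level_set_mean {V : Type*} [PartialOrder V] [Fintype V] [Nonempty V]
    (f w : V → ℝ) (hw : ∀ v, 0 < w v) (g : V → ℝ) (hg : Monotone g)
    (hmin : ∀ h : V → ℝ, Monotone h →
      ∑ v, w v * (g v - f v) ^ 2 ≤ ∑ v, w v * (h v - f v) ^ 2) :
    ∀ c ∈ Set.range g,
      c = (∑ v ∈ Finset.univ.filter (fun v => g v = c), w v * f v) /
          (∑ v ∈ Finset.univ.filter (fun v => g v = c), w v) := by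
  rintro c ⟨v₀, hv₀⟩
  set L := Finset.univ.filter (fun v => g v = c) with hL
  have hWpos : 0 < ∑ v ∈ L, w v :=
    Finset.sum_pos (fun v _ => hw v) ⟨v₀, by simp [hL, hv₀]⟩
  set W := ∑ v ∈ L, w v with hW
  set A := ∑ v ∈ L, w v * (c - f v) with hA
  have hA0 : A = 0 := by
    by_contra hne
    have h1 : ∀ᶠ ε : ℝ in nhdsWithin 0 (Set.Ioi 0), ∀ v, g v ≠ c → |ε * A| < |g v - c| := by
      rw [Filter.eventually_all]
      intro v
      by_cases hv : g v = c
      · simp [hv]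
      · have hc : Continuous (fun ε : ℝ => |ε * A|) := by fun_prop
        have hp : (0:ℝ) < |g v - c| := abs_pos.mpr (sub_ne_zero.mpr hv)
        have := hc.continuousAt.eventually_lt (x₀ := (0:ℝ))
          (continuousAt_const (y := |g v - c|)) (by simpa using hp)
        filter_upwards [nhdsWithin_le_nhds this] with ε hε _ using hε
    have h2 : ∀ᶠ ε : ℝ in nhdsWithin 0 (Set.Ioi 0), ε * W < 1 := by
      have hc : Continuous (fun ε : ℝ => ε * W) := by fun_prop
      exact nhdsWithin_le_nhds (hc.continuousAt.eventually_lt (x₀ := (0:ℝ))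
          (continuousAt_const (y := (1:ℝ))) (by simp))
    obtain ⟨ε, ⟨h1, h2⟩, h3⟩ := ((h1.and h2).and self_mem_nhdsWithin).exists
    have h3 : 0 < ε := h3
    have hm : Monotone (fun v => if g v = c then c - ε * A else g v) := by
      intro a b hab
      have hg' := hg hab
      have ha := h1 a
      have hb := h1 b
      have e1 := le_abs_self (ε * A)
      have e2 := neg_abs_le (ε * A)
      dsimp only
      split_ifs with p q q
      · exact le_rfl
      · have := hb q
        rw [abs_of_nonneg (by linarith : 0 ≤ g b - c)] at this
        linarith
      · have := ha p
        rw [abs_of_nonpos (by linarith : g a - c ≤ 0)] at this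
        linarith
      · exact hg'
    have key := hmin _ hm
    have hd : ∀ t : ℝ, ∑ v, w v * ((if g v = c then c - t else g v) - f v) ^ 2
        - ∑ v, w v * (g v - f v) ^ 2 = -2 * t * A + t ^ 2 * W := by
      intro t
      rw [← Finset.sum_sub_distrib, hW, hA,
        Finset.mul_sum, Finset.mul_sum, ← Finset.sum_add_distrib, hL, Finset.sum_filter]
      refine Finset.sum_congr rfl fun v _ => ?_
      split_ifs with p
      · rw [p]; ring
      · ring
    have hd := hd (ε * A)
    have hpos : 0 < ε * A ^ 2 := by positivity
    nlinarith
  rw [eq_div_iff hWpos.ne', hW, Finset.mul_sum, ← sub_eq_zero, ← Finset.sum_sub_distrib, ← hA0, hA]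
  exact Finset.sum_congr rfl fun v _ => by ring
end

section
/- For a linear order: let n ≥ 1, f : Fin n → ℝ, and w : Fin n → ℝ with w(i) ≥ 0 for all i. The minimum of ∑_{i} w(i)·[g(i) ≠ f(i)] over all monotone nondecreasing g : Fin n → ℝ is attained and equals ∑_{i} w(i) − max{∑_{i ∈ S} w(i) : S ⊆ Fin n such that for all i, j ∈ S with i < j, f(i) ≤ f(j)}; i.e., the optimal weighted L0 error equals the total weight minus the maximum weight of a nondecreasing subsequence of f. -/
/-- For a linear order, the optimal weighted L0 error over monotone nondecreasing
functions is attained and equals the total weight minus the maximum weight of a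
nondecreasing subsequence of `f`. -/
theorem linear_L0_eq_total_sub_max_nondecreasing_subsequence
    (n : ℕ) (hn : 1 ≤ n) (f w : Fin n → ℝ) (hw : ∀ i, 0 ≤ w i) :
    ∃ g : Fin n → ℝ, Monotone g ∧
      (∀ h : Fin n → ℝ, Monotone h →
        ∑ i, w i * (if g i = f i then 0 else 1) ≤
          ∑ i, w i * (if h i = f i then 0 else 1)) ∧
      ∑ i, w i * (if g i = f i then 0 else 1) =
        (∑ i, w i) -
          sSup {x : ℝ | ∃ S : Finset (Fin n),
            (∀ i ∈ S, ∀ j ∈ S, i < j → f i ≤ f j) ∧ x = ∑ i ∈ S, w i} := by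
  classical
  have herr : ∀ h : Fin n → ℝ, ∑ i, w i * (if h i = f i then (0:ℝ) else 1) =
      (∑ i, w i) - ∑ i ∈ Finset.univ.filter (fun i => h i = f i), w i := by
    intro h
    rw [Finset.sum_filter, ← Finset.sum_sub_distrib]
    refine Finset.sum_congr rfl fun i _ => ?_
    split_ifs <;> simp
  have hagree : ∀ h : Fin n → ℝ, Monotone h →
      ∀ i ∈ Finset.univ.filter (fun i => h i = f i),
      ∀ j ∈ Finset.univ.filter (fun i => h i = f i), i < j → f i ≤ f j := by
    intro h hh i hi j hj hij
    rw [← (Finset.mem_filter.1 hi).2, ← (Finset.mem_filter.1 hj).2]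
    exact hh hij.le
  obtain ⟨S, hS, hmax⟩ := Finset.exists_max_image
    (Finset.univ.filter (fun S : Finset (Fin n) => ∀ i ∈ S, ∀ j ∈ S, i < j → f i ≤ f j))
    (fun S => ∑ i ∈ S, w i) ⟨∅, by simp⟩
  have hS := (Finset.mem_filter.1 hS).2
  have hmax : ∀ T : Finset (Fin n), (∀ i ∈ T, ∀ j ∈ T, i < j → f i ≤ f j) →
      ∑ i ∈ T, w i ≤ ∑ i ∈ S, w i := fun T hT =>
    hmax T (Finset.mem_filter.2 ⟨Finset.mem_univ _, hT⟩)
  have hsup : sSup {x : ℝ | ∃ S : Finset (Fin n),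
      (∀ i ∈ S, ∀ j ∈ S, i < j → f i ≤ f j) ∧ x = ∑ i ∈ S, w i} = ∑ i ∈ S, w i := by
    refine IsGreatest.csSup_eq ⟨⟨S, hS, rfl⟩, ?_⟩
    rintro x ⟨T, hT, rfl⟩
    exact hmax T hT
  have hmono : MonotoneOn f (S : Set (Fin n)) := by
    intro i hi j hj hij
    rcases hij.eq_or_lt with rfl | h
    · exact le_rfl
    · exact hS i hi j hj h
  obtain ⟨g, hg, hgS⟩ := hmono.exists_monotone_extension
    (Set.toFinite _).bddBelow (Set.toFinite _).bddAbove
  have hgw : ∑ i ∈ Finset.univ.filter (fun i => g i = f i), w i = ∑ i ∈ S, w i := by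
    refine le_antisymm (hmax _ (hagree g hg)) ?_
    refine Finset.sum_le_sum_of_subset_of_nonneg ?_ fun i _ _ => hw i
    intro i hi
    exact Finset.mem_filter.2 ⟨Finset.mem_univ _, (hgS hi).symm⟩
  refine ⟨g, hg, ?_, ?_⟩
  · intro h hh
    rw [herr, herr, hgw]
    linarith [hmax _ (hagree h hh)]
  · rw [herr, hgw, hsup]
end

section
/- (Completeness and uniqueness of Steiner coordinates.) Let q, r be binary strings of length k with val(q) < val(r). Then there exists exactly one Steiner string t of length k containing at least one * such that q ⊑ t and t ⊑ r, namely the Steiner string whose binary prefix is the longest common prefix of q and r, followed by *'s. -/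
/-- The value of a binary string of length `k`, most significant bit first. -/
def val {k : ℕ} (q : Fin k → Bool) : ℕ :=
  ∑ i : Fin k, if q i then 2 ^ (k - 1 - (i : ℕ)) else 0

/-- A Steiner string of length `k`: a binary prefix followed by `*`'s (here a `*` is
encoded as `none`), so the `none` positions form a suffix. -/
structure SteinerStr (k : ℕ) where
  t : Fin k → Option Bool
  suffix : ∀ i j : Fin k, i ≤ j → t i = none → t j = none

/-- A Steiner string contains a `*` iff some position is `none`. -/
def SteinerStr.hasStar {k : ℕ} (s : SteinerStr k) : Prop := ∃ i, s.t i = none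

/-- `q ⊑ t` for a binary string `q` and Steiner string `t` with binary prefix `p` of
length `ℓ`: `q` agrees with `p` on the prefix and, if `ℓ < k`, the bit of `q` at the
first `*` position is `0`. -/
def belowSteiner {k : ℕ} (q : Fin k → Bool) (s : SteinerStr k) : Prop :=
  (∀ i : Fin k, ∀ b : Bool, s.t i = some b → q i = b) ∧
  (∀ i : Fin k, s.t i = none → (∀ j : Fin k, j < i → (s.t j).isSome) → q i = false)

/-- `t ⊑ q` for a Steiner string `t` with binary prefix `p` of length `ℓ` and a binary
string `q`: `q` agrees with `p` on the prefix and, if `ℓ < k`, the bit of `q` at the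
first `*` position is `1`. -/
def steinerBelow {k : ℕ} (s : SteinerStr k) (q : Fin k → Bool) : Prop :=
  (∀ i : Fin k, ∀ b : Bool, s.t i = some b → q i = b) ∧
  (∀ i : Fin k, s.t i = none → (∀ j : Fin k, j < i → (s.t j).isSome) → q i = true)

theorem val_succ_aux {k : ℕ} (q : Fin (k+1) → Bool) :
    val q = (if q 0 then 2 ^ k else 0) + val (fun i : Fin k => q i.succ) := by
  unfold val
  rw [Fin.sum_univ_succ]
  congr 1
  apply Finset.sum_congr rfl
  intro i _
  have : k + 1 - 1 - (i.succ : ℕ) = k - 1 - (i : ℕ) := by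
    simp only [Fin.val_succ]; omega
  rw [this]

theorem val_lt_aux {k : ℕ} (q : Fin k → Bool) : val q < 2 ^ k := by
  induction k with
  | zero => simp [val]
  | succ k ih =>
    rw [val_succ_aux, pow_succ]
    have := ih (fun i : Fin k => q i.succ)
    split_ifs <;> omega

theorem first_diff_aux {k : ℕ} (q r : Fin k → Bool) (h : val q < val r) :
    ∃ i, q i = false ∧ r i = true ∧ ∀ j, j < i → q j = r j := by
  induction k with
  | zero => simp [val] at h
  | succ k ih =>
    rw [val_succ_aux q, val_succ_aux r] at h
    have h1 := val_lt_aux (fun i : Fin k => q i.succ)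
    have h2 := val_lt_aux (fun i : Fin k => r i.succ)
    have key : q 0 = r 0 → ∃ i, q i = false ∧ r i = true ∧ ∀ j, j < i → q j = r j := by
      intro e
      rw [e] at h
      obtain ⟨i, a, b, c⟩ := ih _ _ (Nat.lt_of_add_lt_add_left h)
      refine ⟨i.succ, a, b, fun j hj => ?_⟩
      induction j using Fin.cases with
      | zero => exact e
      | succ j => exact c j (Fin.succ_lt_succ_iff.mp hj)
    cases hq : q 0 <;> cases hr : r 0
    · exact key (by rw [hq, hr])
    · exact ⟨0, hq, hr, fun j hj => absurd hj (Fin.not_lt_zero j)⟩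
    · simp [hq, hr] at h; omega
    · exact key (by rw [hq, hr])

theorem steiner_form_aux {k : ℕ} (q r : Fin k → Bool) (i : Fin k) (hq : q i = false)
    (hr : r i = true) (hlt : ∀ j, j < i → q j = r j) (t : SteinerStr k) (hs : t.hasStar)
    (h1 : belowSteiner q t) (h2 : steinerBelow t r) (j : Fin k) :
    t.t j = if j < i then some (q j) else none := by
  obtain ⟨m, hm, hmin⟩ := WellFounded.has_min (wellFounded_lt (α := Fin k))
    {m | t.t m = none} hs
  have hm : t.t m = none := hm
  have hsome : ∀ j, j < m → (t.t j).isSome := by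
    intro j hj
    rw [Option.isSome_iff_ne_none]
    exact fun h => hmin j h hj
  have hqm := h1.2 m hm hsome
  have hrm := h2.2 m hm hsome
  have hsq : ∀ j, j < m → t.t j = some (q j) ∧ q j = r j := by
    intro j hj
    obtain ⟨b, hb⟩ := Option.isSome_iff_exists.mp (hsome j hj)
    rw [hb, h1.1 j b hb, h2.1 j b hb]
    simp
  have him : m = i := by
    rcases lt_trichotomy m i with h | h | h
    · have := hlt m h
      simp [hqm, hrm] at this
    · exact h
    · have := (hsq i h).2
      simp [hq, hr] at this
  subst him
  split_ifs with h
  · exact (hsq j h).1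
  · exact t.suffix m j (not_lt.mp h) hm

/-- Completeness and uniqueness of Steiner coordinates: if `val q < val r` then there is
exactly one Steiner string `t` containing a `*` with `q ⊑ t` and `t ⊑ r`; moreover this
`t` is the Steiner string whose binary prefix is the longest common prefix of `q` and
`r`, followed by `*`'s. -/
theorem steiner_complete_unique {k : ℕ} (hk : 1 ≤ k) (q r : Fin k → Bool)
    (hlt : val q < val r) :
    (∃! t : SteinerStr k, t.hasStar ∧ belowSteiner q t ∧ steinerBelow t r) ∧
    (∀ t : SteinerStr k, t.hasStar → belowSteiner q t → steinerBelow t r →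
      ∀ i : Fin k, t.t i = some (q i) ↔ ∀ j : Fin k, j ≤ i → q j = r j) := by
  obtain ⟨i, hq, hr, hd⟩ := first_diff_aux q r hlt
  have form := steiner_form_aux q r i hq hr hd
  have hfirst : ∀ m : Fin k, ¬ m < i →
      (∀ j, j < m → ((if j < i then some (q j) else none : Option Bool)).isSome) → m = i := by
    intro m hm h
    by_contra hne
    have := h i (lt_of_le_of_ne (not_lt.mp hm) (Ne.symm hne))
    simp at this
  refine ⟨⟨⟨fun j => if j < i then some (q j) else none, ?_⟩, ⟨?_, ⟨?_, ?_⟩, ⟨?_, ?_⟩⟩, ?_⟩, ?_⟩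
  · intro a b hab ha
    have ha' : ¬ a < i := by
      intro h
      simp [h] at ha
    exact if_neg (fun h => ha' (lt_of_le_of_lt hab h))
  · exact ⟨i, by simp⟩
  · intro j b hb
    by_cases h : j < i
    · simpa [h] using hb
    · simp [h] at hb
  · intro m hm h
    have hm' : ¬ m < i := fun h => by simp [h] at hm
    rw [hfirst m hm' h, hq]
  · intro j b hb
    by_cases h : j < i
    · rw [← hd j h]
      simpa [h] using hb
    · simp [h] at hb
  · intro m hm h
    have hm' : ¬ m < i := fun h => by simp [h] at hm
    rw [hfirst m hm' h, hr]
  · rintro ⟨s, hs⟩ ⟨a, b, c⟩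
    have := funext (form _ a b c)
    simp only at this
    subst this
    rfl
  · intro t a b c j
    rw [form t a b c j]
    constructor
    · intro h l hl
      by_cases hj : j < i
      · exact hd l (lt_of_le_of_lt hl hj)
      · simp [hj] at h
    · intro h
      by_cases hj : j < i
      · simp [hj]
      · have := h i (not_lt.mp hj)
        simp [hq, hr] at this
end
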